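/- arXiv:1711.00680 — 3 statements merged into one kernel-verified Lean document; each statement's English description precedes it below -/
import Mathlib

section
/- Let L be a nonempty subset with L ⊆ N ⊊ M ⊆ V. Then Σ_{∅ ≠ L' ⊆ L} λ_{L'}^M(x_{L'}) = Σ_{∅ ≠ L' ⊆ L} λ_{L'}^N(x_{L'}) holds for every x_L ∈ 𝔛_L if and only if λ_{L'}^M(x_{L'}) = λ_{L'}^N(x_{L'}) for every nonempty L' ⊆ L and every x_{L'} ∈ 𝔛_{L'}. -/
open Finset

variable {V : Type*} [Fintype V] [DecidableEq V]
variable {𝔛 : V → Type*} [∀ v, Fintype (𝔛 v)] [∀ v, DecidableEq (𝔛 v)]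
  [∀ v, Nonempty (𝔛 v)]

/-- The marginal `p_A` of a distribution `p` on the full table, evaluated at the
`A`-coordinates of `x`. -/
noncomputable def margin (p : (∀ v, 𝔛 v) → ℝ) (A : Finset V) (x : ∀ v, 𝔛 v) : ℝ :=
  ∑ y ∈ Finset.univ.filter (fun y : ∀ v, 𝔛 v => ∀ v ∈ A, y v = x v), p y

/-- `ν_L^M(x_L) = (1/|𝔛_{M∖L}|) Σ_{j ∈ 𝔛_M : j_L = x_L} log p_M(j)`, written with sums over
full configurations (for `L ⊆ M` the extra coordinates cancel against the normalization). -/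
noncomputable def nu (p : (∀ v, 𝔛 v) → ℝ) (L M : Finset V) (x : ∀ v, 𝔛 v) : ℝ :=
  (∏ v ∈ Lᶜ, (Fintype.card (𝔛 v) : ℝ))⁻¹ *
    ∑ j ∈ Finset.univ.filter (fun j : ∀ v, 𝔛 v => ∀ v ∈ L, j v = x v),
      Real.log (margin p M j)

/-- The marginal log-linear parameter `λ_L^M(x_L) = Σ_{L' ⊆ L} (−1)^{|L∖L'|} ν_{L'}^M(x_{L'})`. -/
noncomputable def mll (p : (∀ v, 𝔛 v) → ℝ) (L M : Finset V) (x : ∀ v, 𝔛 v) : ℝ :=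
  ∑ L' ∈ L.powerset, (-1 : ℝ) ^ ((L \ L').card) * nu p L' M x

/-! Averaging over the coordinates outside `S` is a family of conditional expectations, and the
interactions of order `S` are its Möbius transform over subsets. Möbius inversion makes the nonempty
interactions up to `L` telescope to the average over `Lᶜ` minus the overall mean. If these agree for
two functions, then the average of their difference over `Lᶜ` is constant. By the tower property
this average has the same interactions of order `S ⊆ L` as the difference itself, and a constant has
no nonempty interactions. -/

open scoped BigOperators

section Moebius

variable {ι : Type*} [DecidableEq ι]

theorem sum_powerset_neg_one_pow_card_sdiff {s : Finset ι} (hs : s.Nonempty) :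
    ∑ t ∈ s.powerset, (-1 : ℤ) ^ #(s \ t) = 0 := by
  rw [← sum_powerset_neg_one_pow_card_of_nonempty hs]
  refine sum_nbij' (s \ ·) (s \ ·) ?_ ?_ ?_ ?_ fun _ _ ↦ rfl <;> intro t ht <;>
    simp_all [mem_powerset]

theorem sum_powerset_moebius {E : Type*} [AddCommGroup E] (g : Finset ι → E) (s : Finset ι) :
    ∑ t ∈ s.powerset, ∑ u ∈ t.powerset, (-1 : ℤ) ^ #(t \ u) • g u = g s := by
  induction s using Finset.induction_on generalizing g with
  | empty => simp
  | insert a s ha ih =>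
    rw [sum_powerset_insert ha, ← ih fun u ↦ g (insert a u), ← sum_add_distrib]
    refine sum_congr rfl fun t ht ↦ ?_
    have hat : a ∉ t := fun h ↦ ha (mem_powerset.1 ht h)
    have sum_avoiding : ∑ u ∈ t.powerset, (-1 : ℤ) ^ #(insert a t \ u) • g u =
        -∑ u ∈ t.powerset, (-1 : ℤ) ^ #(t \ u) • g u := by
      rw [← sum_neg_distrib]
      refine sum_congr rfl fun u hu ↦ ?_
      have hau : a ∉ u := fun h ↦ hat (mem_powerset.1 hu h)
      rw [insert_sdiff_of_notMem _ hau, card_insert_of_notMem fun h ↦ hat (mem_sdiff.1 h).1,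
        pow_succ, mul_neg_one, neg_smul]
    rw [sum_powerset_insert hat, sum_avoiding, add_neg_cancel_left]
    refine sum_congr rfl fun u _ ↦ ?_
    rw [insert_sdiff_insert, sdiff_insert_of_notMem hat]

end Moebius

section Interaction

variable {ι : Type*} [Fintype ι] [DecidableEq ι] {α : ι → Type*} [∀ i, Fintype (α i)]
  [∀ i, DecidableEq (α i)]

/-- The set of configurations that agree with `x` on the coordinates in `S`. -/
def cylinder (S : Finset ι) (x : ∀ i, α i) : Finset (∀ i, α i) :=
  {y | ∀ i ∈ S, y i = x i}

theorem mem_cylinder {S : Finset ι} {x y : ∀ i, α i} :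
    y ∈ cylinder S x ↔ ∀ i ∈ S, y i = x i := by
  simp only [cylinder, mem_filter_univ]

theorem cylinder_nonempty (S : Finset ι) (x : ∀ i, α i) : (cylinder S x).Nonempty :=
  ⟨x, mem_cylinder.2 fun _ _ ↦ rfl⟩

theorem mem_cylinder_comm {S : Finset ι} {x y : ∀ i, α i} :
    y ∈ cylinder S x ↔ x ∈ cylinder S y := by
  simp only [mem_cylinder, eq_comm]

theorem cylinder_eq_of_mem {S : Finset ι} {x y : ∀ i, α i} (h : y ∈ cylinder S x) :
    cylinder S y = cylinder S x := by
  ext z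
  simp only [mem_cylinder] at h ⊢
  exact forall₂_congr fun i hi ↦ by rw [h i hi]

theorem cylinder_subset_cylinder {S T : Finset ι} (hST : S ⊆ T) (x : ∀ i, α i) :
    cylinder T x ⊆ cylinder S x := fun _ hy ↦
  mem_cylinder.2 fun i hi ↦ mem_cylinder.1 hy i (hST hi)

theorem cylinder_eq_piFinset (S : Finset ι) (x : ∀ i, α i) :
    cylinder S x = Fintype.piFinset fun i ↦ if i ∈ S then {x i} else univ := by
  ext y
  simp only [mem_cylinder, Fintype.mem_piFinset]
  refine forall_congr' fun i ↦ ?_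
  by_cases hi : i ∈ S <;> simp [hi]

theorem card_cylinder (S : Finset ι) (x : ∀ i, α i) :
    #(cylinder S x) = ∏ i ∈ Sᶜ, Fintype.card (α i) := by
  simp only [cylinder_eq_piFinset, Fintype.card_piFinset, apply_ite card, card_singleton,
    card_univ, prod_ite, prod_const_one, one_mul, compl_eq_univ_sdiff, filter_notMem_eq_sdiff]

theorem sum_cylinder_comm {E : Type*} [AddCommMonoid E] {S T : Finset ι} (hST : S ⊆ T)
    (x : ∀ i, α i) (F : (∀ i, α i) → (∀ i, α i) → E) :
    ∑ y ∈ cylinder S x, ∑ z ∈ cylinder T y, F y z =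
      ∑ z ∈ cylinder S x, ∑ y ∈ cylinder T z, F y z := by
  refine sum_comm' fun y z ↦ ?_
  rw [mem_cylinder_comm (x := y), and_comm, and_congr_right_iff]
  intro hyz
  have hSyz := cylinder_eq_of_mem (cylinder_subset_cylinder hST z hyz)
  rw [mem_cylinder_comm (x := x), mem_cylinder_comm (x := x), hSyz]

/-- The average of `f` over the configurations that agree with `x` on `S`, i.e. the conditional
expectation of `f` given the coordinates in `S` under the uniform distribution. -/
noncomputable def cylinderAvg {E : Type*} [AddCommMonoid E] [Module ℚ≥0 E] (S : Finset ι)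
    (f : (∀ i, α i) → E) (x : ∀ i, α i) : E :=
  𝔼 y ∈ cylinder S x, f y

section AddCommMonoid

variable {E : Type*} [AddCommMonoid E] [Module ℚ≥0 E]

theorem cylinderAvg_const (S : Finset ι) (c : E) (x : ∀ i, α i) :
    cylinderAvg S (fun _ ↦ c) x = c :=
  expect_const (cylinder_nonempty S x) c

theorem cylinderAvg_empty (f : (∀ i, α i) → E) (x : ∀ i, α i) :
    cylinderAvg ∅ f x = 𝔼 y, f y := by
  simp [cylinderAvg, cylinder]

theorem cylinderAvg_cylinderAvg {S T : Finset ι} (hST : S ⊆ T) (f : (∀ i, α i) → E)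
    (x : ∀ i, α i) : cylinderAvg S (cylinderAvg T f) x = cylinderAvg S f x := by
  have inner (z : ∀ i, α i) :
      ∑ _y ∈ cylinder T z, (∏ i ∈ Tᶜ, Fintype.card (α i) : ℚ≥0)⁻¹ • f z = f z := by
    have hcard : (#(cylinder T z) : ℚ≥0) ≠ 0 :=
      Nat.cast_ne_zero.2 (cylinder_nonempty T z).card_ne_zero
    rw [sum_const, ← Nat.cast_smul_eq_nsmul ℚ≥0, ← Nat.cast_prod, ← card_cylinder T z,
      smul_inv_smul₀ hcard]
  simp only [cylinderAvg, expect, card_cylinder T, Nat.cast_prod, smul_sum (s := cylinder T _)]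
  rw [sum_cylinder_comm hST, sum_congr rfl fun z _ ↦ inner z]

end AddCommMonoid

section AddCommGroup

variable {E : Type*} [AddCommGroup E] [Module ℚ≥0 E]

/-- The interaction of order `S` in the ANOVA decomposition of `f` with respect to the uniform
distribution: the Möbius transform of `T ↦ cylinderAvg T f x` over the subsets of `S`. -/
noncomputable def interaction (S : Finset ι) (f : (∀ i, α i) → E) (x : ∀ i, α i) : E :=
  ∑ T ∈ S.powerset, (-1 : ℤ) ^ #(S \ T) • cylinderAvg T f x

theorem interaction_sub (S : Finset ι) (f g : (∀ i, α i) → E) (x : ∀ i, α i) :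
    interaction S (f - g) x = interaction S f x - interaction S g x := by
  simp only [interaction, cylinderAvg, Pi.sub_apply, expect_sub_distrib, smul_sub,
    sum_sub_distrib]

theorem interaction_const {S : Finset ι} (hS : S.Nonempty) (c : E) (x : ∀ i, α i) :
    interaction S (fun _ ↦ c) x = 0 := by
  simp only [interaction, cylinderAvg_const, ← sum_smul,
    sum_powerset_neg_one_pow_card_sdiff hS, zero_smul]

theorem interaction_cylinderAvg {S L : Finset ι} (hSL : S ⊆ L) (f : (∀ i, α i) → E)
    (x : ∀ i, α i) : interaction S (cylinderAvg L f) x = interaction S f x :=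
  sum_congr rfl fun _ hT ↦ by rw [cylinderAvg_cylinderAvg ((mem_powerset.1 hT).trans hSL)]

theorem sum_nonempty_interaction (L : Finset ι) (f : (∀ i, α i) → E) (x : ∀ i, α i) :
    ∑ S ∈ L.powerset with S.Nonempty, interaction S f x = cylinderAvg L f x - 𝔼 y, f y := by
  have total : ∑ S ∈ L.powerset, interaction S f x = cylinderAvg L f x :=
    sum_powerset_moebius (cylinderAvg · f x) L
  have empty_part : ∑ S ∈ L.powerset with ¬ S.Nonempty, interaction S f x = 𝔼 y, f y := by
    simp [not_nonempty_iff_eq_empty, filter_eq', interaction, cylinderAvg_empty]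
  rw [← total, ← empty_part, ← sum_filter_add_sum_filter_not L.powerset Finset.Nonempty,
    add_sub_cancel_right]

theorem stmt1_general (L : Finset ι) (f g : (∀ i, α i) → E) :
    (∀ x, ∑ S ∈ L.powerset with S.Nonempty, interaction S f x =
        ∑ S ∈ L.powerset with S.Nonempty, interaction S g x) ↔
      ∀ S ⊆ L, S.Nonempty → ∀ x, interaction S f x = interaction S g x := by
  refine ⟨fun h S hSL hS x ↦ sub_eq_zero.1 ?_, fun h x ↦ sum_congr rfl fun S hS ↦ ?_⟩
  · have avg_const : cylinderAvg L (f - g) = fun _ ↦ 𝔼 y, (f - g) y := by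
      funext y
      rw [← sub_eq_zero, ← sum_nonempty_interaction]
      simp only [interaction_sub, sum_sub_distrib, h y, sub_self]
    rw [← interaction_sub, ← interaction_cylinderAvg hSL, avg_const, interaction_const hS]
  · rw [mem_filter, mem_powerset] at hS
    exact h S hS.1 hS.2 x

end AddCommGroup

theorem nu_eq_cylinderAvg (p : (∀ i, α i) → ℝ) (L M : Finset ι) (x : ∀ i, α i) :
    nu p L M x = cylinderAvg L (fun y ↦ Real.log (margin p M y)) x := by
  rw [cylinderAvg, expect_eq_sum_div_card, card_cylinder, Nat.cast_prod, div_eq_inv_mul]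
  rfl

theorem mll_eq_interaction (p : (∀ i, α i) → ℝ) (L M : Finset ι) (x : ∀ i, α i) :
    mll p L M x = interaction L (fun y ↦ Real.log (margin p M y)) x := by
  simp [mll, interaction, nu_eq_cylinderAvg, zsmul_eq_mul]

end Interaction

theorem stmt1 (p : (∀ v, 𝔛 v) → ℝ) (hp : ∀ x, 0 < p x) (hsum : ∑ x, p x = 1)
    (L N M : Finset V) (hL : L.Nonempty) (hLN : L ⊆ N) (hNM : N ⊂ M) :
    (∀ x : ∀ v, 𝔛 v,
        ∑ L' ∈ L.powerset.filter (fun S => S.Nonempty), mll p L' M x =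
        ∑ L' ∈ L.powerset.filter (fun S => S.Nonempty), mll p L' N x) ↔
    (∀ L' ⊆ L, L'.Nonempty → ∀ x : ∀ v, 𝔛 v, mll p L' M x = mll p L' N x) := by
  simp only [mll_eq_interaction]
  exact stmt1_general L _ _
end

section
/- Fix M ⊆ V and let (μ_L)_{L ⊆ M} be a family of real-valued functions, μ_L : 𝔛_L → ℝ (with μ_∅ a constant), satisfying the identifiability constraints Σ_{x_v ∈ 𝔛_v} μ_L(x_v, x_{L∖{v}}) = 0 for every nonempty L ⊆ M, every v ∈ L, and every fixed x_{L∖{v}}. Then log p_M(x_M) = Σ_{L ⊆ M} μ_L(x_L) holds for all x_M ∈ 𝔛_M if and only if ν_A^M(x_A) = Σ_{L ⊆ A} μ_L(x_L) holds for every A ⊆ M and every x_A ∈ 𝔛_A. -/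
open Finset

variable {V : Type*} [Fintype V] [DecidableEq V]
variable {𝔛 : V → Type*} [∀ v, Fintype (𝔛 v)] [∀ v, DecidableEq (𝔛 v)]
  [∀ v, Nonempty (𝔛 v)]

/-!
Averaging a function over the coordinates outside `A` fixes every term `μ L` with `L ⊆ A`, and
kills every other term: for `v ∈ L \ A`, averaging over the coordinate `v` first already gives `0`.
Since `nu p A M` is such an average of `log p_M`, the expansion of `log p_M` restricts to one of
each `nu p A M`; the converse is the case `A = M`, in which the averaged function is constant.
-/

section CondAverage

open scoped BigOperators

variable {ι : Type*} [Fintype ι] [DecidableEq ι]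
  {α : ι → Type*} [∀ i, Fintype (α i)] [∀ i, DecidableEq (α i)]
  {E : Type*} [AddCommMonoid E] [Module ℚ≥0 E]

/-- The conditional average of `f` given the coordinates in `A`, under the uniform distribution:
the mean of `f` over the configurations that agree with `x` on `A`. It depends only on the
restriction of `x` to `A`, but takes a full configuration so that no subtypes are needed. -/
def condAverage (A : Finset ι) (f : (∀ i, α i) → E) (x : ∀ i, α i) : E :=
  𝔼 y with ∀ i ∈ A, y i = x i, f y

theorem condAverage_eq_self_of_dependsOn {A : Finset ι} {f : (∀ i, α i) → E}
    (hf : DependsOn f A) (x : ∀ i, α i) : condAverage A f x = f x := by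
  have hx : ({y | ∀ i ∈ A, y i = x i} : Finset (∀ i, α i)).Nonempty := ⟨x, by simp⟩
  calc condAverage A f x
      = 𝔼 y : ∀ i, α i with ∀ i ∈ A, y i = x i, f x :=
        expect_congr rfl fun y hy => hf (mem_filter.mp hy).2
    _ = f x := expect_const hx _

theorem condAverage_sum {κ : Type*} (s : Finset κ) (A : Finset ι) (f : κ → (∀ i, α i) → E)
    (x : ∀ i, α i) :
    condAverage A (fun y => ∑ k ∈ s, f k y) x = ∑ k ∈ s, condAverage A (f k) x :=
  expect_sum_comm _ _ _

theorem condAverage_expect_update {A : Finset ι} {i : ι} (hi : i ∉ A) (f : (∀ j, α j) → E)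
    (x : ∀ j, α j) :
    condAverage A (fun y => 𝔼 a, f (Function.update y i a)) x = condAverage A f x := by
  have : Nonempty (α i) := ⟨x i⟩
  let S : Finset (∀ j, α j) := {y | ∀ j ∈ A, y j = x j}
  let swap (q : (∀ j, α j) × α i) : (∀ j, α j) × α i := (Function.update q.1 i q.2, q.1 i)
  have swap_mem : ∀ q ∈ S ×ˢ univ, swap q ∈ S ×ˢ univ := by
    intro q hq
    simp only [S, swap, mem_product, mem_filter_univ, mem_univ, and_true] at hq ⊢
    intro j hj
    rw [Function.update_of_ne (ne_of_mem_of_not_mem hj hi), hq j hj]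
  have swap_swap (q) : swap (swap q) = q := by simp [swap]
  calc condAverage A (fun y => 𝔼 a, f (Function.update y i a)) x
      = 𝔼 y ∈ S, 𝔼 a, f (Function.update y i a) := rfl
    _ = 𝔼 q ∈ S ×ˢ univ, f (swap q).1 := (expect_product S univ fun q => f (swap q).1).symm
    _ = 𝔼 q ∈ S ×ˢ univ, f q.1 :=
        expect_nbij' swap swap swap_mem swap_mem (fun q _ => swap_swap q)
          (fun q _ => swap_swap q) fun _ _ => rfl
    _ = 𝔼 y ∈ S, 𝔼 _a : α i, f y := expect_product S univ fun q => f q.1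
    _ = condAverage A f x := expect_congr rfl fun _ _ => Fintype.expect_const _

theorem condAverage_eq_zero_of_sum_update_eq_zero {A : Finset ι} {i : ι} (hi : i ∉ A)
    {f : (∀ j, α j) → E} (hf : ∀ x, ∑ a, f (Function.update x i a) = 0) (x : ∀ j, α j) :
    condAverage A f x = 0 := by
  rw [← condAverage_expect_update hi]
  exact expect_eq_zero fun y _ => by rw [expect, hf, smul_zero]

theorem condAverage_sum_powerset {A M : Finset ι} (hA : A ⊆ M)
    {μ : Finset ι → (∀ i, α i) → E} (hloc : ∀ L ⊆ A, DependsOn (μ L) L)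
    (hid : ∀ L ⊆ M, ∀ i ∈ L, ∀ x, ∑ a, μ L (Function.update x i a) = 0) (x : ∀ i, α i) :
    condAverage A (fun y => ∑ L ∈ M.powerset, μ L y) x = ∑ L ∈ A.powerset, μ L x := by
  have average_inside (L) (hL : L ⊆ A) : condAverage A (μ L) x = μ L x :=
    condAverage_eq_self_of_dependsOn ((hloc L hL).mono (coe_subset.mpr hL)) x
  have average_outside (L) (hL : L ⊆ M) (hLA : ¬L ⊆ A) : condAverage A (μ L) x = 0 := by
    obtain ⟨i, hiL, hiA⟩ := not_subset.mp hLA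
    exact condAverage_eq_zero_of_sum_update_eq_zero hiA (hid L hL i hiL) x
  calc condAverage A (fun y => ∑ L ∈ M.powerset, μ L y) x
      = ∑ L ∈ M.powerset, condAverage A (μ L) x := condAverage_sum _ _ _ _
    _ = ∑ L ∈ A.powerset, condAverage A (μ L) x :=
        (sum_subset (powerset_mono.mpr hA) fun L hL hLA =>
          average_outside L (mem_powerset.mp hL) (mt mem_powerset.mpr hLA)).symm
    _ = ∑ L ∈ A.powerset, μ L x :=
        sum_congr rfl fun L hL => average_inside L (mem_powerset.mp hL)

theorem card_filter_forall_mem_eq (A : Finset ι) (x : ∀ i, α i) :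
    #{y : ∀ i, α i | ∀ i ∈ A, y i = x i} = ∏ i ∈ Aᶜ, Fintype.card (α i) := by
  have filter_eq_piFinset : ({y | ∀ i ∈ A, y i = x i} : Finset (∀ i, α i)) =
      Fintype.piFinset fun i => if i ∈ A then {x i} else univ := by
    ext y
    simp only [mem_filter_univ, Fintype.mem_piFinset]
    refine forall_congr' fun i => ?_
    by_cases hi : i ∈ A <;> simp [hi]
  rw [filter_eq_piFinset, Fintype.card_piFinset]
  simp only [apply_ite card, card_singleton, card_univ, prod_ite, prod_const_one, one_mul,
    filter_notMem_eq_sdiff, compl_eq_univ_sdiff]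

theorem dependsOn_margin (p : (∀ i, α i) → ℝ) (A : Finset ι) : DependsOn (margin p A) A := by
  intro x y hxy
  have agree_iff (z : ∀ i, α i) : (∀ i ∈ A, z i = x i) ↔ ∀ i ∈ A, z i = y i :=
    forall₂_congr fun i hi => by rw [hxy i hi]
  simp only [margin, agree_iff]

theorem nu_eq_condAverage (p : (∀ i, α i) → ℝ) (A M : Finset ι) (x : ∀ i, α i) :
    nu p A M x = condAverage A (fun y => Real.log (margin p M y)) x := by
  rw [nu, condAverage, expect_eq_sum_div_card, card_filter_forall_mem_eq, Nat.cast_prod,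
    div_eq_inv_mul]

theorem stmt2_general {M : Finset ι} {g : (∀ i, α i) → E} (hg : DependsOn g M)
    {μ : Finset ι → (∀ i, α i) → E} (hloc : ∀ L ⊆ M, DependsOn (μ L) L)
    (hid : ∀ L ⊆ M, ∀ i ∈ L, ∀ x, ∑ a, μ L (Function.update x i a) = 0) :
    (∀ x, g x = ∑ L ∈ M.powerset, μ L x) ↔
      ∀ A ⊆ M, ∀ x, condAverage A g x = ∑ L ∈ A.powerset, μ L x := by
  constructor
  · intro h A hA x
    rw [funext h]
    exact condAverage_sum_powerset hA (fun L hL => hloc L (hL.trans hA)) hid x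
  · intro h x
    rw [← h M Subset.rfl x, condAverage_eq_self_of_dependsOn hg]

end CondAverage

theorem stmt2 (p : (∀ v, 𝔛 v) → ℝ) (hp : ∀ x, 0 < p x) (hsum : ∑ x, p x = 1)
    (M : Finset V) (μ : Finset V → (∀ v, 𝔛 v) → ℝ)
    (hloc : ∀ L ⊆ M, ∀ x y : ∀ v, 𝔛 v, (∀ v ∈ L, x v = y v) → μ L x = μ L y)
    (hid : ∀ L ⊆ M, ∀ v ∈ L, ∀ x : ∀ u, 𝔛 u,
      ∑ a : 𝔛 v, μ L (Function.update x v a) = 0) :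
    (∀ x : ∀ v, 𝔛 v, Real.log (margin p M x) = ∑ L ∈ M.powerset, μ L x) ↔
    (∀ A ⊆ M, ∀ x : ∀ v, 𝔛 v, nu p A M x = ∑ L ∈ A.powerset, μ L x) := by
  simp only [nu_eq_condAverage]
  exact stmt2_general (fun _ _ h => congrArg Real.log (dependsOn_margin p M h)) hloc hid
end

section
/- Let A, B, C be pairwise disjoint subsets of V with A and B nonempty. If X_A ⟂ X_B | X_C, then for every D ⊆ C and every x ∈ 𝔛_{A∪D}, λ_{A∪D}^{A∪B∪C}(x) = λ_{A∪D}^{A∪C}(x). -/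
open Finset

variable {V : Type*} [Fintype V] [DecidableEq V]
variable {𝔛 : V → Type*} [∀ v, Fintype (𝔛 v)] [∀ v, DecidableEq (𝔛 v)]
  [∀ v, Nonempty (𝔛 v)]

/-- `X_A ⟂ X_B | X_C`: `p_{A∪B∪C}·p_C = p_{A∪C}·p_{B∪C}` pointwise. -/
def CondIndep (p : (∀ v, 𝔛 v) → ℝ) (A B C : Finset V) : Prop :=
  ∀ x : ∀ v, 𝔛 v,
    margin p (A ∪ B ∪ C) x * margin p C x = margin p (A ∪ C) x * margin p (B ∪ C) x

/-!
Under `X_A ⟂ X_B | X_C`, taking logarithms and then the linear operations defining `ν` and `λ` gives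
`λ_L^{A∪B∪C} + λ_L^C = λ_L^{A∪C} + λ_L^{B∪C}`. If some `a ∈ L` is not in `M`, then `log p_M` is
constant in the coordinate `a`, so `ν_{L'}^M = ν_{L'∪{a}}^M` and the alternating sum `λ_L^M`
cancels in pairs. For `L ⊄ B ∪ C` this kills `λ_L^C` and `λ_L^{B∪C}`.
-/

theorem sum_powerset_neg_one_pow_card_sdiff_mul_eq_zero {α R : Type*} [DecidableEq α] [Ring R]
    {g : Finset α → R} {s : Finset α} {a : α} (ha : a ∈ s)
    (hg : ∀ t ⊆ s, g (insert a t) = g t) :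
    ∑ t ∈ s.powerset, (-1 : R) ^ #(s \ t) * g t = 0 := by
  obtain ⟨r, har, rfl⟩ : ∃ r, a ∉ r ∧ insert a r = s :=
    ⟨s.erase a, notMem_erase a s, insert_erase ha⟩
  rw [sum_powerset_insert har, ← sum_add_distrib]
  refine sum_eq_zero fun t ht ↦ ?_
  have htr : t ⊆ r := mem_powerset.1 ht
  have hat : a ∉ t := fun h ↦ har (htr h)
  have card_sdiff : #(insert a r \ t) = #(r \ t) + 1 := by
    rw [insert_sdiff_of_notMem _ hat, card_insert_of_notMem fun h ↦ har (mem_sdiff.1 h).1]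
  have card_sdiff_insert : #(insert a r \ insert a t) = #(r \ t) := by
    rw [insert_sdiff_insert, sdiff_insert_of_notMem har]
  rw [hg t (htr.trans (subset_insert a r)), card_sdiff, card_sdiff_insert, pow_succ, mul_neg_one,
    neg_mul, neg_add_cancel]

section

omit [∀ v, Nonempty (𝔛 v)]

variable {p f : (∀ v, 𝔛 v) → ℝ} {A B C K L M : Finset V} {a : V}

theorem dependsOn_margin_s4 (p : (∀ v, 𝔛 v) → ℝ) (M : Finset V) : DependsOn (margin p M) ↑M := by
  intro x y hxy
  refine sum_congr (filter_congr fun z _ ↦ forall₂_congr fun v hv ↦ ?_) fun _ _ ↦ rfl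
  rw [hxy v hv]

theorem margin_pos (hp : ∀ x, 0 < p x) (M : Finset V) (x : ∀ v, 𝔛 v) : 0 < margin p M x :=
  sum_pos (fun y _ ↦ hp y) ⟨x, by simp⟩

theorem margin_anti (hp : ∀ x, 0 ≤ p x) (hKM : K ⊆ M) (x : ∀ v, 𝔛 v) :
    margin p M x ≤ margin p K x :=
  sum_le_sum_of_subset_of_nonneg (monotone_filter_right _ fun _ _ h v hv ↦ h v (hKM hv))
    fun y _ _ ↦ hp y

theorem margin_eq_card_mul_margin_insert {s : Set V} (hf : DependsOn f s) (has : a ∉ s)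
    (haL : a ∉ L) (x : ∀ v, 𝔛 v) : margin f L x = Fintype.card (𝔛 a) * margin f (insert a L) x := by
  have f_update (j : ∀ v, 𝔛 v) (t : 𝔛 a) : f (Function.update j a t) = f j :=
    hf fun v hv ↦ Function.update_of_ne (ne_of_mem_of_not_mem hv has) _ _
  have ne_of_mem {v : V} (hv : v ∈ L) : v ≠ a := ne_of_mem_of_not_mem hv haL
  calc margin f L x
    _ = ∑ q ∈ univ.filter (fun j : ∀ v, 𝔛 v ↦ ∀ v ∈ insert a L, j v = x v) ×ˢ
          (univ : Finset (𝔛 a)), f q.1 :=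
        sum_nbij' (fun j ↦ (Function.update j a (x a), j a)) (fun q ↦ Function.update q.1 a q.2)
          (by simp +contextual [ne_of_mem]) (by simp +contextual [ne_of_mem]) (by simp)
          (by simp +contextual [Prod.ext_iff])
          (by simp [f_update])
    _ = Fintype.card (𝔛 a) * margin f (insert a L) x := by
        simp [sum_product, margin, mul_sum]

theorem nu_eq_inv_prod_mul_margin (p : (∀ v, 𝔛 v) → ℝ) (L M : Finset V) (x : ∀ v, 𝔛 v) :
    nu p L M x = (∏ v ∈ Lᶜ, (Fintype.card (𝔛 v) : ℝ))⁻¹ *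
      margin (fun j ↦ Real.log (margin p M j)) L x :=
  rfl

theorem nu_insert_of_notMem (p : (∀ v, 𝔛 v) → ℝ) (L : Finset V) (ha : a ∉ M) (x : ∀ v, 𝔛 v) :
    nu p (insert a L) M x = nu p L M x := by
  by_cases haL : a ∈ L
  · rw [insert_eq_of_mem haL]
  have log_dependsOn : DependsOn (fun j ↦ Real.log (margin p M j)) ↑M :=
    fun _ _ h ↦ congrArg Real.log (dependsOn_margin_s4 p M h)
  have prod_compl : ∏ v ∈ Lᶜ, (Fintype.card (𝔛 v) : ℝ) =
      Fintype.card (𝔛 a) * ∏ v ∈ (insert a L)ᶜ, (Fintype.card (𝔛 v) : ℝ) := by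
    rw [compl_insert, mul_prod_erase _ (fun v ↦ (Fintype.card (𝔛 v) : ℝ)) (mem_compl.2 haL)]
  have : Nonempty (𝔛 a) := ⟨x a⟩
  have card_ne_zero : (Fintype.card (𝔛 a) : ℝ) ≠ 0 := Nat.cast_ne_zero.2 Fintype.card_ne_zero
  rw [nu_eq_inv_prod_mul_margin, nu_eq_inv_prod_mul_margin, prod_compl,
    margin_eq_card_mul_margin_insert log_dependsOn (mem_coe.not.2 ha) haL, mul_inv_rev, mul_assoc,
    inv_mul_cancel_left₀ card_ne_zero]

-- The paper defines `λ_L^M` for `L ⊆ M` only; summing over full configurations extends it by zero.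
-- Under this convention, `stmt4_general` for `L` meeting both `A` and `B` (disjoint from each other
-- and from `C`) says that `λ_L^{A∪B∪C}` vanishes.
theorem mll_eq_zero_of_not_subset (p : (∀ v, 𝔛 v) → ℝ) (hLM : ¬ L ⊆ M) (x : ∀ v, 𝔛 v) :
    mll p L M x = 0 := by
  obtain ⟨a, haL, haM⟩ := not_subset.1 hLM
  exact sum_powerset_neg_one_pow_card_sdiff_mul_eq_zero haL fun K _ ↦ nu_insert_of_notMem p K haM x

theorem CondIndep.log_margin_add (hci : CondIndep p A B C) (hp : ∀ x, 0 ≤ p x)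
    (hpos : ∀ x, 0 < margin p (A ∪ B ∪ C) x) (x : ∀ v, 𝔛 v) :
    Real.log (margin p (A ∪ B ∪ C) x) + Real.log (margin p C x) =
      Real.log (margin p (A ∪ C) x) + Real.log (margin p (B ∪ C) x) := by
  have margin_ne_zero {K : Finset V} (hK : K ⊆ A ∪ B ∪ C) : margin p K x ≠ 0 :=
    ((hpos x).trans_le (margin_anti hp hK x)).ne'
  rw [← Real.log_mul (margin_ne_zero (by grind)) (margin_ne_zero (by grind)), hci x,
    Real.log_mul (margin_ne_zero (by grind)) (margin_ne_zero (by grind))]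

theorem CondIndep.nu_add (hci : CondIndep p A B C) (hp : ∀ x, 0 ≤ p x)
    (hpos : ∀ x, 0 < margin p (A ∪ B ∪ C) x) (L : Finset V) (x : ∀ v, 𝔛 v) :
    nu p L (A ∪ B ∪ C) x + nu p L C x = nu p L (A ∪ C) x + nu p L (B ∪ C) x := by
  simp only [nu, ← mul_add, ← sum_add_distrib, hci.log_margin_add hp hpos]

theorem CondIndep.mll_add (hci : CondIndep p A B C) (hp : ∀ x, 0 ≤ p x)
    (hpos : ∀ x, 0 < margin p (A ∪ B ∪ C) x) (L : Finset V) (x : ∀ v, 𝔛 v) :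
    mll p L (A ∪ B ∪ C) x + mll p L C x = mll p L (A ∪ C) x + mll p L (B ∪ C) x := by
  simp only [mll, ← mul_add, ← sum_add_distrib, hci.nu_add hp hpos]

theorem stmt4_general (hp : ∀ x, 0 ≤ p x) (hpos : ∀ x, 0 < margin p (A ∪ B ∪ C) x)
    (hci : CondIndep p A B C) (hL : ¬ L ⊆ B ∪ C) (x : ∀ v, 𝔛 v) :
    mll p L (A ∪ B ∪ C) x = mll p L (A ∪ C) x := by
  have mll_B_C : mll p L (B ∪ C) x = 0 := mll_eq_zero_of_not_subset p hL x
  have mll_C : mll p L C x = 0 :=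
    mll_eq_zero_of_not_subset p (fun h ↦ hL (h.trans subset_union_right)) x
  simpa only [mll_B_C, mll_C, add_zero] using hci.mll_add hp hpos L x

end

theorem stmt4 (p : (∀ v, 𝔛 v) → ℝ) (hp : ∀ x, 0 < p x) (hsum : ∑ x, p x = 1)
    (A B C : Finset V) (hA : A.Nonempty) (hB : B.Nonempty)
    (hAB : Disjoint A B) (hAC : Disjoint A C) (hBC : Disjoint B C)
    (hci : CondIndep p A B C) :
    ∀ D ⊆ C, ∀ x : ∀ v, 𝔛 v,
      mll p (A ∪ D) (A ∪ B ∪ C) x = mll p (A ∪ D) (A ∪ C) x := by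
  intro D _ x
  have hAD : ¬ A ∪ D ⊆ B ∪ C := fun h ↦
    hA.ne_empty ((disjoint_union_right.2 ⟨hAB, hAC⟩).eq_bot_of_le (subset_union_left.trans h))
  exact stmt4_general (fun x ↦ (hp x).le) (margin_pos hp _) hci hAD x
end
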